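/- Let F : H → ℝ be a convex, coercive, differentiable function on a real Hilbert space H with nonempty set of minimizers X* which is second order regular, and minimum F*. Assume F satisfies the local quadratic growth condition G²_{μ,loc} for some μ > 0: there exists ε > 0 such that (μ/2)·d(x,X*)² ≤ F(x) − F* whenever d(x,X*) ≤ ε. Let α > 3 and let x : [t₀, ∞) → H be a twice differentiable solution of ẍ(t) + (α/t)·ẋ(t) + ∇F(x(t)) = 0, with t₀ ≥ 0. If μ is small enough, then F(x(t)) − F* = O(t^{−2α/3}) and ‖ẋ(t)‖ = O(t^{−α/3}) as t → ∞, and the trajectory x(·) converges strongly to a minimizer of F. -/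

import Mathlib

open Filter Metric Topology Asymptotics

/-- The inner second order tangent set to `S` at `xb` in the direction `dir`:
`T²_S(x̄,h) = {w : d(x̄ + t h + ½ t² w, S) = o(t²) as t ↓ 0}`. -/
def innerSecondOrderTangentSet {H : Type*} [NormedAddCommGroup H] [InnerProductSpace ℝ H]
    (S : Set H) (xb dir : H) : Set H :=
  {w : H |
    (fun t : ℝ => Metric.infDist (xb + t • dir + (t ^ 2 / 2) • w) S)
      =o[nhdsWithin (0 : ℝ) (Set.Ioi 0)] fun t : ℝ => t ^ 2}

/-- `S` is second order regular at `x̄ ∈ S` if for every direction `h` and every sequence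
`xₙ = x̄ + tₙ h + ½ tₙ² rₙ` in `S` with `tₙ` monotonically non-increasing to `0` and
`tₙ rₙ → 0`, one has `d(rₙ, T²_S(x̄,h)) → 0`. -/
def SecondOrderRegularAt {H : Type*} [NormedAddCommGroup H] [InnerProductSpace ℝ H]
    (S : Set H) (xb : H) : Prop :=
  ∀ (dir : H) (t : ℕ → ℝ) (r : ℕ → H),
    (∀ n : ℕ, xb + t n • dir + ((t n) ^ 2 / 2) • r n ∈ S) →
    Antitone t → (∀ n : ℕ, 0 < t n) → Tendsto t atTop (𝓝 (0 : ℝ)) →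
    Tendsto (fun n : ℕ => t n • r n) atTop (𝓝 (0 : H)) →
    Tendsto (fun n : ℕ => Metric.infDist (r n) (innerSecondOrderTangentSet S xb dir))
      atTop (𝓝 (0 : ℝ))

/-- `S` is second order regular if it is second order regular at every point of `S`. -/
def SecondOrderRegular {H : Type*} [NormedAddCommGroup H] [InnerProductSpace ℝ H]
    (S : Set H) : Prop :=
  ∀ xb ∈ S, SecondOrderRegularAt S xb

/-- `D` is an upper bound for the upper right Dini derivative of `f` at `t`. -/
def UpperRight (f : ℝ → ℝ) (D t : ℝ) : Prop :=
  ∃ g : ℝ → ℝ, Tendsto g (𝓝[>] t) (𝓝 D) ∧ ∀ᶠ s in 𝓝[>] t, slope f t s ≤ g s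

theorem UpperRight.of_hasDerivAt {f : ℝ → ℝ} {D t : ℝ} (h : HasDerivAt f D t) :
    UpperRight f D t :=
  ⟨slope f t, (hasDerivAt_iff_tendsto_slope.1 h).mono_left
    (nhdsWithin_mono _ (fun s hs => (ne_of_gt hs : s ≠ t))), Eventually.of_forall fun _ => le_rfl⟩

theorem UpperRight.add {f g : ℝ → ℝ} {D E t : ℝ} (hf : UpperRight f D t)
    (hg : UpperRight g E t) : UpperRight (fun s => f s + g s) (D + E) t := by
  obtain ⟨m, hm, hm'⟩ := hf
  obtain ⟨n, hn, hn'⟩ := hg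
  refine ⟨fun s => m s + n s, hm.add hn, ?_⟩
  filter_upwards [hm', hn'] with s h1 h2
  have : slope (fun s => f s + g s) t s = slope f t s + slope g t s := by
    simp only [slope_def_field]; ring
  linarith

theorem UpperRight.mul {c f : ℝ → ℝ} {c' D t : ℝ} (hc : HasDerivAt c c' t)
    (hpos : ∀ᶠ s in 𝓝[>] t, 0 ≤ c s)
    (hf : UpperRight f D t) : UpperRight (fun s => c s * f s) (c t * D + c' * f t) t := by
  obtain ⟨m, hm, hm'⟩ := hf
  have hs : Tendsto (slope c t) (𝓝[>] t) (𝓝 c') :=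
    (hasDerivAt_iff_tendsto_slope.1 hc).mono_left
      (nhdsWithin_mono _ (fun s hs => (ne_of_gt hs : s ≠ t)))
  have hcc : Tendsto c (𝓝[>] t) (𝓝 (c t)) := hc.continuousAt.continuousWithinAt
  refine ⟨fun s => c s * m s + slope c t s * f t, (hcc.mul hm).add (hs.mul_const _), ?_⟩
  filter_upwards [hm', hpos] with s h1 h2
  have : slope (fun s => c s * f s) t s = c s * slope f t s + slope c t s * f t := by
    simp only [slope_def_field]; ring
  rw [this]
  have := mul_le_mul_of_nonneg_left h1 h2
  linarith

theorem UpperRight.le_of_nonpos {f D : ℝ → ℝ} {T : ℝ} (hf : ContinuousOn f (Set.Ici T))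
    (h : ∀ t, T ≤ t → UpperRight f (D t) t) (hD : ∀ t, T ≤ t → D t ≤ 0) :
    ∀ t, T ≤ t → f t ≤ f T := by
  intro t ht
  refine image_le_of_liminf_slope_right_le_deriv_boundary (f := f) (a := T) (b := t)
    (B := fun _ => f T) (B' := fun _ => 0)
    (hf.mono Set.Icc_subset_Ici_self) le_rfl continuousOn_const
    (fun s _ => (hasDerivAt_const s (f T)).hasDerivWithinAt) ?_ ⟨ht, le_rfl⟩
  intro s hs r hr
  obtain ⟨g, hg, hg'⟩ := h s hs.1
  have : ∀ᶠ z in 𝓝[>] s, g z < r := hg.eventually_lt_const (lt_of_le_of_lt (hD s hs.1) hr)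
  refine Eventually.frequently ?_
  filter_upwards [this, hg'] with z h1 h2
  exact lt_of_le_of_lt h2 h1

section
variable {H : Type*} [NormedAddCommGroup H] [InnerProductSpace ℝ H]

open scoped InnerProductSpace

theorem slope_tendsto_right {f : ℝ → H} {f' : H} {t : ℝ} (h : HasDerivAt f f' t) :
    Tendsto (slope f t) (𝓝[>] t) (𝓝 f') :=
  (hasDerivAt_iff_tendsto_slope.1 h).mono_left
    (nhdsWithin_mono _ (fun s hs => (ne_of_gt hs : s ≠ t)))

/-- existence of the projection on a closed convex set -/
theorem exists_proj [CompleteSpace H] {K : Set H} (hne : K.Nonempty) (hcl : IsClosed K)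
    (hcv : Convex ℝ K) : ∃ P : H → H, (∀ z, P z ∈ K) ∧
      (∀ z, ∀ w ∈ K, ⟪z - P z, w - P z⟫_ℝ ≤ 0) ∧ ∀ z, ‖z - P z‖ = infDist z K := by
  have key : ∀ z : H, ∃ p ∈ K, (∀ w ∈ K, ⟪z - p, w - p⟫_ℝ ≤ 0) ∧ ‖z - p‖ = infDist z K := by
    intro z
    obtain ⟨p, hp, hpe⟩ := exists_norm_eq_iInf_of_complete_convex hne hcl.isComplete hcv z
    refine ⟨p, hp, (norm_eq_iInf_iff_real_inner_le_zero hcv hp).1 hpe, ?_⟩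
    rw [hpe, infDist_eq_iInf]
    simp only [dist_eq_norm]
  choose P h1 h2 h3 using key
  exact ⟨P, h1, h2, h3⟩

/-- `I - P` is nonexpansive. -/
theorem resid_nonexp {K : Set H} {P : H → H} (hP : ∀ z, P z ∈ K)
    (hin : ∀ z, ∀ w ∈ K, ⟪z - P z, w - P z⟫_ℝ ≤ 0) (x y : H) :
    ‖(x - P x) - (y - P y)‖ ≤ ‖x - y‖ := by
  have h1 := hin x _ (hP y)
  have h2 := hin y _ (hP x)
  have e : x - y = ((x - P x) - (y - P y)) + (P x - P y) := by abel
  have h3 : 0 ≤ ⟪(x - P x) - (y - P y), P x - P y⟫_ℝ := by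
    have : P y - P x = -(P x - P y) := by abel
    rw [this, inner_neg_right] at h1
    rw [inner_sub_left]; linarith
  have h4 : ‖x - y‖ ^ 2 = ‖(x - P x) - (y - P y)‖ ^ 2
      + 2 * ⟪(x - P x) - (y - P y), P x - P y⟫_ℝ + ‖P x - P y‖ ^ 2 := by
    conv_lhs => rw [e]
    exact norm_add_sq_real _ _
  refine (pow_le_pow_iff_left₀ (norm_nonneg _) (norm_nonneg _) two_ne_zero).1 ?_
  nlinarith [sq_nonneg ‖P x - P y‖]

theorem upper_q {y x v : ℝ → H} {v' a : H} {t : ℝ} (hx : HasDerivAt x v' t)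
    (hv : HasDerivAt v a t) (hy : ∀ s, ‖y s - y t‖ ≤ ‖x s - x t‖) :
    UpperRight (fun s => ⟪y s, v s⟫_ℝ) (⟪y t, a⟫_ℝ + ‖v'‖ * ‖v t‖) t := by
  refine ⟨fun s => ⟪y t, slope v t s⟫_ℝ + ‖slope x t s‖ * ‖v s‖, ?_, ?_⟩
  · have hvv : Tendsto v (𝓝[>] t) (𝓝 (v t)) := hv.continuousAt.continuousWithinAt
    exact (tendsto_const_nhds.inner (slope_tendsto_right hv)).add
      ((slope_tendsto_right hx).norm.mul hvv.norm)
  · filter_upwards [self_mem_nhdsWithin] with s hs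
    have hs' : 0 < s - t := sub_pos.2 hs
    have e1 : ⟪y t, slope v t s⟫_ℝ = (s - t)⁻¹ * ⟪y t, v s - v t⟫_ℝ := by
      rw [slope_def_module, inner_smul_right]
    have e2 : ‖slope x t s‖ = (s - t)⁻¹ * ‖x s - x t‖ := by
      rw [slope_def_module, norm_smul, Real.norm_of_nonneg (inv_nonneg.2 hs'.le)]
    rw [e1, e2, slope_def_field, div_eq_inv_mul, mul_assoc, ← mul_add]
    refine mul_le_mul_of_nonneg_left ?_ (inv_nonneg.2 hs'.le)
    have h1 : ⟪y s - y t, v s⟫_ℝ ≤ ‖x s - x t‖ * ‖v s‖ :=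
      (real_inner_le_norm _ _).trans (mul_le_mul_of_nonneg_right (hy s) (norm_nonneg _))
    rw [inner_sub_left] at h1
    rw [inner_sub_right]
    linarith

theorem upper_p {y x : ℝ → H} {v' : H} {t : ℝ} (hx : HasDerivAt x v' t)
    (hy : ∀ s, ‖y s‖ ≤ ‖y t + (x s - x t)‖) :
    UpperRight (fun s => ‖y s‖ ^ 2 / 2) ⟪y t, v'⟫_ℝ t := by
  refine ⟨fun s => ⟪y t, slope x t s⟫_ℝ + ‖slope x t s‖ * ‖x s - x t‖ / 2, ?_, ?_⟩
  · have hxx : Tendsto (fun s => ‖x s - x t‖) (𝓝[>] t) (𝓝 ‖x t - x t‖) :=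
      (hx.continuousAt.continuousWithinAt.tendsto.sub_const _).norm
    have := (tendsto_const_nhds (x := y t)).inner (𝕜 := ℝ) (slope_tendsto_right hx) |>.add
      (((slope_tendsto_right hx).norm.mul hxx).div_const 2)
    simpa using this
  · filter_upwards [self_mem_nhdsWithin] with s hs
    have hs' : 0 < s - t := sub_pos.2 hs
    have e1 : ⟪y t, slope x t s⟫_ℝ = (s - t)⁻¹ * ⟪y t, x s - x t⟫_ℝ := by
      rw [slope_def_module, inner_smul_right]
    have e2 : ‖slope x t s‖ = (s - t)⁻¹ * ‖x s - x t‖ := by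
      rw [slope_def_module, norm_smul, Real.norm_of_nonneg (inv_nonneg.2 hs'.le)]
    rw [e1, e2, slope_def_field, div_eq_inv_mul, mul_assoc, mul_div_assoc, ← mul_add]
    refine mul_le_mul_of_nonneg_left ?_ (inv_nonneg.2 hs'.le)
    have h1 : ‖y s‖ ^ 2 ≤ ‖y t + (x s - x t)‖ ^ 2 := by gcongr; exact hy s
    rw [norm_add_sq_real] at h1
    nlinarith

theorem grad_ineq [CompleteSpace H] {F : H → ℝ} {g x : H} (hconv : ConvexOn ℝ Set.univ F)
    (hg : HasGradientAt F g x) (z : H) : F x - F z ≤ ⟪x - z, g⟫_ℝ := by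
  have hl : HasDerivAt (fun s : ℝ => F (x + s • (z - x))) ⟪g, z - x⟫_ℝ 0 := by
    have h1 : HasDerivAt (fun s : ℝ => x + s • (z - x)) (z - x) 0 := by
      simpa using ((hasDerivAt_id (0 : ℝ)).smul_const (z - x)).const_add x
    have h2 : HasFDerivAt F (InnerProductSpace.toDual ℝ H g) (x + (0 : ℝ) • (z - x)) := by
      simpa using hg.hasFDerivAt
    have h3 := h2.comp_hasDerivAt (0 : ℝ) h1
    rw [InnerProductSpace.toDual_apply_apply] at h3
    exact h3
  have hle : ⟪g, z - x⟫_ℝ ≤ F z - F x := by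
    refine le_of_tendsto (slope_tendsto_right hl) ?_
    have : ∀ᶠ s in 𝓝[>] (0 : ℝ), s < 1 :=
      nhdsWithin_le_nhds (Iio_mem_nhds one_pos)
    filter_upwards [this, self_mem_nhdsWithin] with s h1 h2
    have h2' : (0 : ℝ) < s := h2
    have h3 := hconv.2 (Set.mem_univ x) (Set.mem_univ z) (sub_nonneg.2 h1.le) h2'.le (by ring)
    have e : (1 - s) • x + s • z = x + s • (z - x) := by
      rw [sub_smul, smul_sub, one_smul]; abel
    rw [e] at h3
    simp only [smul_eq_mul] at h3
    rw [slope_def_field, sub_zero, div_le_iff₀ h2']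
    simp only [zero_smul, add_zero]
    linarith
  have : x - z = -(z - x) := by abel
  rw [this, inner_neg_left, real_inner_comm]
  linarith

theorem hasDerivAt_val [CompleteSpace H] {F : H → ℝ} {g : H} {x : ℝ → H} {v : H} {t : ℝ}
    (hg : HasGradientAt F g (x t)) (hx : HasDerivAt x v t) (c : ℝ) :
    HasDerivAt (fun s => F (x s) - c) ⟪g, v⟫_ℝ t := by
  have h3 := hg.hasFDerivAt.comp_hasDerivAt t hx
  rw [InnerProductSpace.toDual_apply_apply] at h3
  exact h3.sub_const c

/-- The basic `O(1/t²)` rate. -/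
theorem basic_rate [CompleteSpace H] {F : H → ℝ} {F' : H → H}
    (hconv : ConvexOn ℝ Set.univ F) (hgrad : ∀ z : H, HasGradientAt F (F' z) z)
    (xs : H) (hmin : ∀ w, F xs ≤ F w) {α T : ℝ} (hα : 3 < α) (hT : 1 ≤ T) {x v a : ℝ → H}
    (hx : ∀ t : ℝ, T ≤ t → HasDerivAt x (v t) t)
    (hv : ∀ t : ℝ, T ≤ t → HasDerivAt v (a t) t)
    (hode : ∀ t : ℝ, T ≤ t → a t + (α / t) • v t + F' (x t) = 0) :
    ∃ C, ∀ t, T ≤ t → t ^ 2 * (F (x t) - F xs) ≤ C := by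
  set E : ℝ → ℝ := fun t => t ^ 2 * (F (x t) - F xs)
    + ‖(α - 1) • (x t - xs) + t • v t‖ ^ 2 / 2 with hE
  set D : ℝ → ℝ := fun t => 2 * t * (F (x t) - F xs)
    - t * (α - 1) * ⟪x t - xs, F' (x t)⟫_ℝ with hD
  have hder : ∀ t, T ≤ t → HasDerivAt E (D t) t := by
    intro t ht
    have ht0 : t ≠ 0 := by linarith
    have h1 := hasDerivAt_val (hgrad (x t)) (hx t ht) (F xs)
    have h2 : HasDerivAt (fun s : ℝ => s ^ 2) (2 * t) t := by simpa using hasDerivAt_pow 2 t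
    have h3 : HasDerivAt (fun s => (α - 1) • (x s - xs) + s • v s)
        ((α - 1) • v t + (t • a t + (1 : ℝ) • v t)) t :=
      (((hx t ht).sub_const xs).const_smul (α - 1)).add ((hasDerivAt_id t).smul (hv t ht))
    have e : (α - 1) • v t + (t • a t + (1 : ℝ) • v t) = -(t • F' (x t)) := by
      have h4 : a t = -((α / t) • v t) - F' (x t) := by
        rw [← sub_eq_zero, ← hode t ht]; abel
      have h5 : t • ((α / t) • v t) = α • v t := by rw [smul_smul, mul_div_cancel₀ _ ht0]
      rw [h4, smul_sub, smul_neg, h5, sub_smul]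
      abel
    rw [e] at h3
    have h6 := (h2.mul h1).add (h3.norm_sq.div_const 2)
    refine h6.congr_deriv ?_
    simp only [hD, inner_neg_right, inner_add_left, inner_smul_left, inner_smul_right,
      RCLike.conj_to_real]
    rw [real_inner_comm (v t) (F' (x t))]
    ring
  refine ⟨E T, fun t ht => ?_⟩
  have := UpperRight.le_of_nonpos (f := E) (D := D) (T := T)
    (fun t ht => (hder t ht).continuousAt.continuousWithinAt)
    (fun t ht => UpperRight.of_hasDerivAt (hder t ht)) ?_ t ht
  · refine le_trans ?_ this
    simp only [hE]
    have := sq_nonneg ‖(α - 1) • (x t - xs) + t • v t‖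
    linarith
  · intro t ht
    have h1 := grad_ineq hconv (hgrad (x t)) xs
    have h2 := hmin (x t)
    have h3 : 0 ≤ t * (α - 1) := by nlinarith
    have h4 := mul_le_mul_of_nonneg_left h1 h3
    simp only [hD]
    have h5 : 0 ≤ (α - 3) * t * (F (x t) - F xs) :=
      mul_nonneg (mul_nonneg (by linarith) (by linarith)) (by linarith)
    nlinarith

theorem fast_algebra {α A K' t i w p q V G gy μ : ℝ} (hα : 3 < α) (ht : 0 < t)
    (hi : t * i = 1) (hA : A = 2 * α / 3 * (1 + α / 3)) (hμ : 0 < μ)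
    (hK : K' = (2 * α / 3 - 2) * A / μ) (hgy : w ≤ gy) (hp : μ * p ≤ w)
    (hE : t ^ 2 * w / 2 ≤ t ^ 2 * w + t ^ 2 * V / 2 + A * p + 2 * α / 3 * t * q) :
    (2 * t * w + t ^ 2 * G + t * V + t ^ 2 * (-(α * i) * V - G) + A * q
      + (2 * α / 3 * t * (-(α * i) * q - gy + V) + 2 * α / 3 * q))
    + ((2 * α / 3 - 2) * i - 2 * K' * i ^ 3) *
      (t ^ 2 * w + t ^ 2 * V / 2 + A * p + 2 * α / 3 * t * q) ≤ 0 := by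
  have hi0 : 0 < i := by
    by_contra h
    nlinarith [not_lt.1 h]
  have hA0 : 0 < A := by rw [hA]; positivity
  have hK0 : 0 < K' := by rw [hK]; exact div_pos (mul_pos (by linarith) hA0) hμ
  have h1 : K' * i * w ≤ 2 * K' * i ^ 3 *
      (t ^ 2 * w + t ^ 2 * V / 2 + A * p + 2 * α / 3 * t * q) := by
    have : K' * i * w = 2 * K' * i ^ 3 * (t ^ 2 * w / 2) := by
      have : i ^ 3 * t ^ 2 = i := by
        calc i ^ 3 * t ^ 2 = i * (t * i) ^ 2 := by ring
          _ = i := by rw [hi]; ring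
      linear_combination (-K' * w) * this
    rw [this]
    exact mul_le_mul_of_nonneg_left hE (by positivity)
  have h2 : (2 * α / 3 - 2) * A * i * p ≤ K' * i * w := by
    have : (2 * α / 3 - 2) * A * i * p = K' * i * (μ * p) := by
      rw [hK]; field_simp
    rw [this]
    exact mul_le_mul_of_nonneg_left hp (by positivity)
  have h3 : 2 * α / 3 * t * w ≤ 2 * α / 3 * t * gy :=
    mul_le_mul_of_nonneg_left hgy (by positivity)
  have h4 : (2 * t * w + t ^ 2 * G + t * V + t ^ 2 * (-(α * i) * V - G) + A * q
      + (2 * α / 3 * t * (-(α * i) * q - gy + V) + 2 * α / 3 * q))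
    + ((2 * α / 3 - 2) * i) *
      (t ^ 2 * w + t ^ 2 * V / 2 + A * p + 2 * α / 3 * t * q)
      = -(2 * α / 3 * t * gy) + 2 * α / 3 * t * w + (2 * α / 3 - 2) * A * i * p := by
    rw [hA]
    linear_combination (-α * t * V - 2 * α / 3 * α * q + (2 * α / 3 - 2) * t * w
      + (2 * α / 3 - 2) * t * V / 2 + (2 * α / 3 - 2) * (2 * α / 3) * q) * hi
  linarith

set_option maxHeartbeats 2000000 in
/-- The fast rate from the Lyapunov function with a moving projection. -/
theorem fast_rate {α T μ : ℝ} (hα : 3 < α) (hT : 1 ≤ T) (hμ : 0 < μ)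
    (hT2 : 2 * (2 * α / 3 * (α / 3 - 1)) / μ ≤ T)
    {x v a y g : ℝ → H} {w : ℝ → ℝ}
    (hx : ∀ t : ℝ, T ≤ t → HasDerivAt x (v t) t)
    (hv : ∀ t : ℝ, T ≤ t → HasDerivAt v (a t) t)
    (hode : ∀ t : ℝ, T ≤ t → a t + (α / t) • v t + g t = 0)
    (hw : ∀ t : ℝ, T ≤ t → HasDerivAt w ⟪g t, v t⟫_ℝ t)
    (hw0 : ∀ t, 0 ≤ w t)
    (hy1 : ∀ s t, ‖y s - y t‖ ≤ ‖x s - x t‖)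
    (hy2 : ∀ s t, ‖y s‖ ≤ ‖y t + (x s - x t)‖)
    (hgy : ∀ t, w t ≤ ⟪y t, g t⟫_ℝ)
    (hp : ∀ t, T ≤ t → μ * (‖y t‖ ^ 2 / 2) ≤ w t) :
    ∃ C, ∀ t, T ≤ t → w t ≤ C * t ^ (-(2 * α) / 3) ∧ ‖v t‖ ≤ C * t ^ (-α / 3) := by
  obtain ⟨A, hA⟩ : ∃ A : ℝ, A = 2 * α / 3 * (1 + α / 3) := ⟨_, rfl⟩
  obtain ⟨K', hK⟩ : ∃ K' : ℝ, K' = (2 * α / 3 - 2) * A / μ := ⟨_, rfl⟩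
  have hA0 : 0 < A := by rw [hA]; positivity
  have hK0 : 0 < K' := by rw [hK]; exact div_pos (mul_pos (by linarith) hA0) hμ
  set E : ℝ → ℝ := fun t => (t ^ 2 * w t + t ^ 2 / 2 * ‖v t‖ ^ 2) + A * (‖y t‖ ^ 2 / 2)
    + 2 * α / 3 * t * ⟪y t, v t⟫_ℝ with hE
  set θ : ℝ → ℝ := fun t => Real.exp ((2 * α / 3 - 2) * Real.log t + K' * (t ^ 2)⁻¹) with hθ
  have hElow : ∀ t, T ≤ t →
      t ^ 2 * w t / 2 + ‖(2 * α / 3) • y t + t • v t‖ ^ 2 / 2 ≤ E t := by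
    intro t ht
    have e : ‖(2 * α / 3) • y t + t • v t‖ ^ 2 = (2 * α / 3) ^ 2 * ‖y t‖ ^ 2
        + 2 * (2 * α / 3 * t * ⟪y t, v t⟫_ℝ) + t ^ 2 * ‖v t‖ ^ 2 := by
      rw [norm_add_sq_real, norm_smul, norm_smul, inner_smul_left, inner_smul_right, mul_pow,
        mul_pow, Real.norm_eq_abs, Real.norm_eq_abs, sq_abs, sq_abs]
      simp only [RCLike.conj_to_real]
      ring
    have h1 : 2 * α / 3 * (α / 3 - 1) * (‖y t‖ ^ 2 / 2) ≤ t ^ 2 * w t / 2 := by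
      have h2 : 2 * (2 * α / 3 * (α / 3 - 1)) ≤ t ^ 2 * μ := by
        rw [div_le_iff₀ hμ] at hT2
        have : T * μ ≤ t ^ 2 * μ := mul_le_mul_of_nonneg_right (by nlinarith) hμ.le
        linarith
      have h3 : 0 ≤ ‖y t‖ ^ 2 / 2 := by positivity
      have h4 := mul_le_mul_of_nonneg_right h2 h3
      have h5 := mul_le_mul_of_nonneg_left (hp t ht) (sq_nonneg t)
      nlinarith
    simp only [hE]
    rw [e, hA]
    nlinarith
  have hyc : ContinuousOn y (Set.Ici T) := by
    intro t ht
    refine (tendsto_iff_norm_sub_tendsto_zero.2 ?_ : Tendsto y _ _)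
    have hxc : ContinuousWithinAt x (Set.Ici T) t := (hx t ht).continuousAt.continuousWithinAt
    exact squeeze_zero (fun s => norm_nonneg _) (fun s => hy1 s t)
      (tendsto_iff_norm_sub_tendsto_zero.1 hxc.tendsto)
  have hvc : ContinuousOn v (Set.Ici T) :=
    fun t ht => (hv t ht).continuousAt.continuousWithinAt
  have hwc : ContinuousOn w (Set.Ici T) :=
    fun t ht => (hw t ht).continuousAt.continuousWithinAt
  have hθd : ∀ t, T ≤ t →
      HasDerivAt θ (θ t * ((2 * α / 3 - 2) * t⁻¹ - 2 * K' * t⁻¹ ^ 3)) t := by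
    intro t ht
    have ht0 : t ≠ 0 := by linarith
    have h2 : HasDerivAt (fun s : ℝ => s ^ 2) (2 * t) t := by simpa using hasDerivAt_pow 2 t
    have h3 := (((Real.hasDerivAt_log ht0).const_mul (2 * α / 3 - 2)).add
      ((h2.inv (pow_ne_zero 2 ht0)).const_mul K')).exp
    refine h3.congr_deriv ?_
    simp only [hθ]
    congr 1
    field_simp
    ring
  have hθc : ContinuousOn θ (Set.Ici T) :=
    fun t ht => (hθd t ht).continuousAt.continuousWithinAt
  have hEc : ContinuousOn E (Set.Ici T) := by
    have hq : ContinuousOn (fun t => ⟪y t, v t⟫_ℝ) (Set.Ici T) := hyc.inner hvc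
    simp only [hE]
    fun_prop
  have hmono : ∀ t, T ≤ t → θ t * E t ≤ θ T * E T := by
    refine UpperRight.le_of_nonpos (f := fun t => θ t * E t)
      (D := fun t => θ t * (((2 * t * w t + t ^ 2 * ⟪g t, v t⟫_ℝ)
        + (t * ‖v t‖ ^ 2 + t ^ 2 / 2 * (2 * ⟪v t, a t⟫_ℝ))) + (A * ⟪y t, v t⟫_ℝ
        + 0 * (‖y t‖ ^ 2 / 2))
        + (2 * α / 3 * t * (⟪y t, a t⟫_ℝ + ‖v t‖ * ‖v t‖) + 2 * α / 3 * ⟪y t, v t⟫_ℝ))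
        + (θ t * ((2 * α / 3 - 2) * t⁻¹ - 2 * K' * t⁻¹ ^ 3)) * E t) (hθc.mul hEc) ?_ ?_
    · intro t ht
      have ht0 : 0 < t := by linarith
      refine UpperRight.mul (hθd t ht) (Eventually.of_forall fun s => (Real.exp_pos _).le) ?_
      have h2 : HasDerivAt (fun s : ℝ => s ^ 2) (2 * t) t := by simpa using hasDerivAt_pow 2 t
      have h2' : HasDerivAt (fun s : ℝ => s ^ 2 / 2) t t :=
        (h2.div_const 2).congr_deriv (by ring)
      have hS := UpperRight.of_hasDerivAt ((h2.mul (hw t ht)).add (h2'.mul (hv t ht).norm_sq))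
      have hP := UpperRight.mul (hasDerivAt_const t A) (Eventually.of_forall fun s => hA0.le)
        (upper_p (hx t ht) (fun s => hy2 s t))
      have hc : HasDerivAt (fun s : ℝ => 2 * α / 3 * s) (2 * α / 3) t := by
        simpa using (hasDerivAt_id t).const_mul (2 * α / 3)
      have hQ := UpperRight.mul hc (by
        filter_upwards [self_mem_nhdsWithin] with s hs
        have : t < s := hs
        have : 0 < s := by linarith
        positivity) (upper_q (hx t ht) (hv t ht) (fun s => hy1 s t))
      exact (hS.add hP).add hQ
    · intro t ht
      have ht0 : 0 < t := by linarith
      have ha : a t = -((α / t) • v t) - g t := by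
        rw [← sub_eq_zero, ← hode t ht]; abel
      have e1 : ⟪v t, a t⟫_ℝ = -(α * t⁻¹) * ‖v t‖ ^ 2 - ⟪g t, v t⟫_ℝ := by
        rw [ha, inner_sub_right, inner_neg_right, inner_smul_right, real_inner_self_eq_norm_sq,
          real_inner_comm (g t) (v t)]
        ring
      have e2 : ⟪y t, a t⟫_ℝ = -(α * t⁻¹) * ⟪y t, v t⟫_ℝ - ⟪y t, g t⟫_ℝ := by
        rw [ha, inner_sub_right, inner_neg_right, inner_smul_right]
        ring
      have key := fast_algebra (α := α) (A := A) (K' := K') (t := t) (i := t⁻¹) (w := w t)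
        (p := ‖y t‖ ^ 2 / 2) (q := ⟪y t, v t⟫_ℝ) (V := ‖v t‖ ^ 2) (G := ⟪g t, v t⟫_ℝ)
        (gy := ⟪y t, g t⟫_ℝ) (μ := μ) hα ht0 (mul_inv_cancel₀ ht0.ne') hA hμ hK (hgy t)
        (hp t ht) (by
          have h1 := hElow t ht
          simp only [hE] at h1
          have h2 := sq_nonneg ‖(2 * α / 3) • y t + t • v t‖
          linarith)
      rw [e1, e2]
      have hθ0 : 0 < θ t := Real.exp_pos _
      have := mul_nonpos_of_nonneg_of_nonpos hθ0.le key
      refine le_of_eq_of_le ?_ this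
      simp only [hE]
      ring
  obtain ⟨M, hM⟩ : ∃ M, M = θ T * E T := ⟨_, rfl⟩
  have hR : ∀ t, T ≤ t → t ^ (2 * α / 3 - 2) * E t ≤ M := by
    intro t ht
    have ht0 : 0 < t := by linarith
    rw [hM]
    refine le_trans ?_ (hmono t ht)
    refine mul_le_mul_of_nonneg_right ?_ ?_
    · rw [Real.rpow_def_of_pos ht0]
      simp only [hθ]
      refine Real.exp_le_exp.2 ?_
      have : 0 ≤ K' * (t ^ 2)⁻¹ := by positivity
      linarith
    · refine le_trans ?_ (hElow t ht)
      have := hw0 t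
      positivity
  obtain ⟨C₂, hC₂⟩ : ∃ C₂, C₂ = 4 * M + 2 * (2 * α / 3) ^ 2 * (2 / μ) * (2 * M) := ⟨_, rfl⟩
  refine ⟨max (2 * M) (Real.sqrt C₂), fun t ht => ?_⟩
  have ht0 : 0 < t := by linarith
  have hsplit : t ^ (2 * α / 3) = t ^ (2 * α / 3 - 2) * t ^ 2 := by
    rw [← Real.rpow_natCast t 2, ← Real.rpow_add ht0]
    norm_num
  have hr : 0 < t ^ (2 * α / 3 - 2) := Real.rpow_pos_of_pos ht0 _
  have hlow := hElow t ht
  have h1 := (mul_le_mul_of_nonneg_left hlow hr.le).trans (hR t ht)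
  have hwn := hw0 t
  have hu : 0 ≤ ‖(2 * α / 3) • y t + t • v t‖ ^ 2 := sq_nonneg _
  have hwb : t ^ (2 * α / 3) * w t ≤ 2 * M := by
    rw [hsplit]
    nlinarith [mul_nonneg hr.le hu]
  have hub : t ^ (2 * α / 3 - 2) * ‖(2 * α / 3) • y t + t • v t‖ ^ 2 ≤ 2 * M := by
    nlinarith [mul_nonneg hr.le (mul_nonneg (sq_nonneg t) hwn)]
  constructor
  · have h2 : t ^ (-(2 * α) / 3) = (t ^ (2 * α / 3))⁻¹ := by
      rw [← Real.rpow_neg ht0.le]; congr 1; ring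
    rw [h2, ← div_eq_mul_inv, le_div_iff₀ (Real.rpow_pos_of_pos ht0 _), mul_comm]
    exact hwb.trans (le_max_left _ _)
  · have h2 : t ^ (-α / 3) = (t ^ (α / 3))⁻¹ := by
      rw [← Real.rpow_neg ht0.le]; congr 1; ring
    rw [h2, ← div_eq_mul_inv, le_div_iff₀ (Real.rpow_pos_of_pos ht0 _), mul_comm]
    refine le_trans ?_ (le_max_right _ _)
    refine Real.le_sqrt_of_sq_le ?_
    have h3 : (t ^ (α / 3)) ^ 2 = t ^ (2 * α / 3) := by
      rw [← Real.rpow_natCast, ← Real.rpow_mul ht0.le]; congr 1; push_cast; ring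
    rw [mul_pow, h3, hsplit]
    have h4 : t ^ 2 * ‖v t‖ ^ 2 ≤ 2 * ‖(2 * α / 3) • y t + t • v t‖ ^ 2
        + 2 * ((2 * α / 3) ^ 2 * ‖y t‖ ^ 2) := by
      have e1 : t • v t = ((2 * α / 3) • y t + t • v t) - (2 * α / 3) • y t := by abel
      have e2 : ‖t • v t‖ ^ 2 = t ^ 2 * ‖v t‖ ^ 2 := by
        rw [norm_smul, mul_pow, Real.norm_eq_abs, sq_abs]
      have e3 : ‖(2 * α / 3) • y t‖ ^ 2 = (2 * α / 3) ^ 2 * ‖y t‖ ^ 2 := by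
        rw [norm_smul, mul_pow, Real.norm_eq_abs, sq_abs]
      rw [← e2, ← e3]
      have h5 := norm_sub_le ((2 * α / 3) • y t + t • v t) ((2 * α / 3) • y t)
      rw [← e1] at h5
      have h6 : ‖t • v t‖ ^ 2 ≤
          (‖(2 * α / 3) • y t + t • v t‖ + ‖(2 * α / 3) • y t‖) ^ 2 := by gcongr
      nlinarith [sq_nonneg (‖(2 * α / 3) • y t + t • v t‖ - ‖(2 * α / 3) • y t‖)]
    have h5 : ‖y t‖ ^ 2 ≤ 2 / μ * (t ^ 2 * w t) := by
      have h6 := hp t ht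
      have h7 : w t ≤ t ^ 2 * w t := by nlinarith [mul_nonneg (by nlinarith : 0 ≤ t ^ 2 - 1) hwn]
      rw [div_mul_eq_mul_div, le_div_iff₀ hμ]
      linarith
    have h6 : t ^ (2 * α / 3 - 2) * ‖y t‖ ^ 2 ≤ 2 / μ * (2 * M) := by
      have h7 := mul_le_mul_of_nonneg_left h5 hr.le
      have h8 : t ^ (2 * α / 3 - 2) * (2 / μ * (t ^ 2 * w t))
          = 2 / μ * (t ^ (2 * α / 3) * w t) := by rw [hsplit]; ring
      rw [h8] at h7
      exact h7.trans (mul_le_mul_of_nonneg_left hwb (by positivity))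
    have h9 := mul_le_mul_of_nonneg_left h4 hr.le
    have h10 := mul_le_mul_of_nonneg_left h6 (by positivity : 0 ≤ 2 * (2 * α / 3) ^ 2)
    rw [hC₂]
    nlinarith

end

/-- Trajectories of the AVD system `ẍ + (α/t) ẋ + ∇F(x) = 0` for a convex, coercive,
differentiable `F` with a second order regular set of minimizers, under a local quadratic
growth condition `G²_{μ,loc}` and `α > 3`: if `μ` is small enough then
`F(x(t)) - F* = O(t^{-2α/3})`, `‖ẋ(t)‖ = O(t^{-α/3})`, and the trajectory converges
strongly to a minimizer of `F`. -/
theorem avd_quadratic_growth_convergence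
    {H : Type*} [NormedAddCommGroup H] [InnerProductSpace ℝ H] [CompleteSpace H]
    (F : H → ℝ) (F' : H → H)
    (hconv : ConvexOn ℝ Set.univ F)
    (hgrad : ∀ z : H, HasGradientAt F (F' z) z)
    (hcoercive : Tendsto F (Bornology.cobounded H) atTop)
    (Xstar : Set H) (hXstar : Xstar = {z : H | ∀ w : H, F z ≤ F w})
    (hXne : Xstar.Nonempty)
    (hreg : SecondOrderRegular Xstar)
    (Fstar : ℝ) (hFstar : ∀ z ∈ Xstar, F z = Fstar)
    -- a twice differentiable solution of (AVD) on `[t₀, ∞)`, with `t₀ ≥ 0` and `α > 3`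
    (α t₀ : ℝ) (hα : 3 < α) (ht₀ : 0 ≤ t₀)
    (x v a : ℝ → H)
    (hx : ∀ t : ℝ, t₀ ≤ t → HasDerivAt x (v t) t)
    (hv : ∀ t : ℝ, t₀ ≤ t → HasDerivAt v (a t) t)
    (hode : ∀ t : ℝ, t₀ ≤ t → a t + (α / t) • v t + F' (x t) = 0) :
    -- if `μ` is small enough (below a threshold `μ₀`) and the local quadratic growth
    -- condition `G²_{μ,loc}` holds, then the conclusions follow
    ∃ μ₀ : ℝ, 0 < μ₀ ∧
      ∀ μ ε : ℝ, 0 < μ → μ ≤ μ₀ → 0 < ε →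
        (∀ z : H, infDist z Xstar ≤ ε → μ / 2 * infDist z Xstar ^ 2 ≤ F z - Fstar) →
        ((fun t : ℝ => F (x t) - Fstar) =O[atTop] fun t : ℝ => t ^ (-(2 * α) / 3)) ∧
        ((fun t : ℝ => ‖v t‖) =O[atTop] fun t : ℝ => t ^ (-α / 3)) ∧
        ∃ xlim ∈ Xstar, Tendsto x atTop (𝓝 xlim) := by
  have hmem : ∀ z, z ∈ Xstar ↔ ∀ w, F z ≤ F w := fun z => by rw [hXstar]; rfl
  have hFc : Continuous F :=
    continuous_iff_continuousAt.2 fun z => (hgrad z).hasFDerivAt.continuousAt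
  obtain ⟨xs, hxs⟩ := hXne
  have hxsF : F xs = Fstar := hFstar xs hxs
  have hge : ∀ z, Fstar ≤ F z := fun z => hxsF ▸ (hmem xs).1 hxs z
  have hXeq : Xstar = {z : H | F z ≤ Fstar} := by
    ext z
    rw [hmem]
    exact ⟨fun h => hxsF ▸ h xs, fun h w => le_trans h (hge w)⟩
  have hcl : IsClosed Xstar := by
    rw [hXeq]; exact isClosed_le hFc continuous_const
  have hcv : Convex ℝ Xstar := by
    rw [hXeq]; simpa using hconv.convex_le Fstar
  obtain ⟨P, hP, hPin, hPd⟩ := exists_proj ⟨xs, hxs⟩ hcl hcv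
  refine ⟨1, one_pos, fun μ ε hμ _ hε hgrow => ?_⟩
  have hT0 : 1 ≤ max t₀ 1 := le_max_right _ _
  obtain ⟨C, hC⟩ := basic_rate hconv hgrad xs ((hmem xs).1 hxs) hα hT0
    (fun t ht => hx t ((le_max_left _ _).trans ht))
    (fun t ht => hv t ((le_max_left _ _).trans ht))
    (fun t ht => hode t ((le_max_left _ _).trans ht))
  rw [hxsF] at hC
  have hδ : 0 < μ / 2 * ε ^ 2 := by positivity
  obtain ⟨T, hTdef⟩ : ∃ T, T = max (max t₀ 1)
    (max (2 * (2 * α / 3 * (α / 3 - 1)) / μ) (|C| / (μ / 2 * ε ^ 2) + 1)) := ⟨_, rfl⟩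
  have hTa : max t₀ 1 ≤ T := hTdef ▸ le_max_left _ _
  have hTt : t₀ ≤ T := (le_max_left _ _).trans hTa
  have hT1 : 1 ≤ T := (le_max_right _ _).trans hTa
  have hTb : 2 * (2 * α / 3 * (α / 3 - 1)) / μ ≤ T :=
    hTdef ▸ (le_max_left _ _).trans (le_max_right _ _)
  have hTc : |C| / (μ / 2 * ε ^ 2) + 1 ≤ T :=
    hTdef ▸ (le_max_right _ _).trans (le_max_right _ _)
  have hsmall : ∀ t, T ≤ t → F (x t) - Fstar < μ / 2 * ε ^ 2 := by
    intro t ht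
    have h1 := hC t (hTa.trans ht)
    have h2 : |C| < t * (μ / 2 * ε ^ 2) := by
      rw [← div_lt_iff₀ hδ]; linarith
    by_contra h
    have h3 := mul_le_mul_of_nonneg_left (not_lt.1 h) (sq_nonneg t)
    have h4 : t * (μ / 2 * ε ^ 2) ≤ t ^ 2 * (μ / 2 * ε ^ 2) :=
      mul_le_mul_of_nonneg_right (by nlinarith) hδ.le
    linarith [le_abs_self C]
  have hdist : ∀ z, F z - Fstar < μ / 2 * ε ^ 2 → infDist z Xstar ≤ ε := by
    intro z hz
    by_contra h
    have hd : ε < ‖z - P z‖ := by rw [hPd]; exact not_le.1 h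
    have hd0 : 0 < ‖z - P z‖ := hε.trans hd
    obtain ⟨c, hc⟩ : ∃ c, c = ε / ‖z - P z‖ := ⟨_, rfl⟩
    have hc0 : 0 < c := hc ▸ div_pos hε hd0
    have hc1 : c ≤ 1 := by rw [hc, div_le_one hd0]; exact hd.le
    have hcd : c * ‖z - P z‖ = ε := by rw [hc, div_mul_cancel₀ _ hd0.ne']
    have h1 := hconv.2 (Set.mem_univ (P z)) (Set.mem_univ z) (sub_nonneg.2 hc1) hc0.le (by ring)
    simp only [smul_eq_mul] at h1
    rw [hFstar _ (hP z)] at h1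
    have e1 : (1 - c) • P z + c • z - P z = c • (z - P z) := by
      rw [sub_smul, smul_sub, one_smul]; abel
    have e2 : z - ((1 - c) • P z + c • z) = (1 - c) • (z - P z) := by
      simp only [sub_smul, smul_sub, one_smul]; abel
    have h2 : infDist ((1 - c) • P z + c • z) Xstar ≤ ε := by
      refine (infDist_le_dist_of_mem (hP z)).trans ?_
      rw [dist_eq_norm, e1, norm_smul, Real.norm_of_nonneg hc0.le, hcd]
    have h3 : ε ≤ infDist ((1 - c) • P z + c • z) Xstar := by
      have h4 := infDist_le_infDist_add_dist (s := Xstar) (x := z) (y := (1 - c) • P z + c • z)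
      rw [dist_eq_norm, e2, norm_smul, Real.norm_of_nonneg (sub_nonneg.2 hc1), ← hPd z] at h4
      linarith
    have h5 := hgrow _ h2
    rw [le_antisymm h2 h3] at h5
    have h6 : c * (F z - Fstar) ≤ F z - Fstar :=
      mul_le_of_le_one_left (sub_nonneg.2 (hge z)) hc1
    linarith
  obtain ⟨C', hC'⟩ := fast_rate (y := fun t => x t - P (x t)) (g := fun t => F' (x t))
    (w := fun t => F (x t) - Fstar) hα hT1 hμ hTb
    (fun t ht => hx t (hTt.trans ht)) (fun t ht => hv t (hTt.trans ht))
    (fun t ht => hode t (hTt.trans ht))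
    (fun t ht => hasDerivAt_val (hgrad (x t)) (hx t (hTt.trans ht)) Fstar)
    (fun t => sub_nonneg.2 (hge _))
    (fun s t => resid_nonexp hP hPin (x s) (x t))
    (fun s t => by
      have e : x t - P (x t) + (x s - x t) = x s - P (x t) := by abel
      rw [e, hPd, ← dist_eq_norm]
      exact infDist_le_dist_of_mem (hP _))
    (fun t => by
      have := grad_ineq hconv (hgrad (x t)) (P (x t))
      rwa [hFstar _ (hP _)] at this)
    (fun t ht => by
      have := hgrow (x t) (hdist _ (hsmall t ht))
      rw [← hPd] at this
      linarith)
  have hO1 : (fun t : ℝ => F (x t) - Fstar) =O[atTop] fun t : ℝ => t ^ (-(2 * α) / 3) := by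
    refine IsBigO.of_bound C' ?_
    filter_upwards [eventually_ge_atTop T] with t ht
    rw [Real.norm_of_nonneg (sub_nonneg.2 (hge _)),
      Real.norm_of_nonneg (Real.rpow_nonneg (by linarith) _)]
    exact (hC' t ht).1
  have hO2 : (fun t : ℝ => ‖v t‖) =O[atTop] fun t : ℝ => t ^ (-α / 3) := by
    refine IsBigO.of_bound C' ?_
    filter_upwards [eventually_ge_atTop T] with t ht
    rw [norm_norm, Real.norm_of_nonneg (Real.rpow_nonneg (by linarith) _)]
    exact (hC' t ht).2
  refine ⟨hO1, hO2, ?_⟩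
  have hint : MeasureTheory.IntegrableOn v (Set.Ioi T) := by
    have h1 : MeasureTheory.IntegrableOn (fun t : ℝ => C' * t ^ (-α / 3)) (Set.Ioi T) :=
      (integrableOn_Ioi_rpow_of_lt (by linarith) (by linarith)).const_mul C'
    refine MeasureTheory.Integrable.mono' h1 ?_ ?_
    · refine ContinuousOn.aestronglyMeasurable ?_ measurableSet_Ioi
      exact fun t ht => (hv t (hTt.trans (le_of_lt ht))).continuousAt.continuousWithinAt
    · filter_upwards [MeasureTheory.ae_restrict_mem measurableSet_Ioi] with t ht
      exact (hC' t (le_of_lt ht)).2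
  have hlim := MeasureTheory.tendsto_limUnder_of_hasDerivAt_of_integrableOn_Ioi
    (fun t ht => hx t (hTt.trans (le_of_lt ht))) hint
  refine ⟨_, ?_, hlim⟩
  have hz : Tendsto (fun t : ℝ => F (x t) - Fstar) atTop (𝓝 0) := by
    refine hO1.trans_tendsto ?_
    have e : (fun t : ℝ => t ^ (-(2 * α) / 3)) = fun t : ℝ => t ^ (-(2 * α / 3)) := by
      funext t; congr 1; ring
    rw [e]
    exact tendsto_rpow_neg_atTop (by linarith)
  have hz2 := ((hFc.tendsto _).comp hlim).sub_const Fstar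
  have := tendsto_nhds_unique hz2 hz
  rw [hXeq]
  exact le_of_eq (sub_eq_zero.1 this)
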